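/- Let G be a graph of diameter 2 on n vertices. Then G is Bonnet-Myers sharp if and only if G can be obtained from the complete graph K_n by deleting a matching (a set of pairwise disjoint edges). -/

import Mathlib

open scoped Classical
open Finset

noncomputable section

/-- The degree of a vertex `x` in the graph `G`. -/
def deg {V : Type*} [Fintype V] (G : SimpleGraph V) (x : V) : ℕ :=
  (Finset.univ.filter (fun y => G.Adj x y)).card

/-- The diameter of `G`: the maximum of the combinatorial distance over all pairs of vertices. -/
def diam {V : Type*} [Fintype V] (G : SimpleGraph V) : ℕ :=
  Finset.univ.sup (fun xy : V × V => G.dist xy.1 xy.2)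

/-- The probability measure `μ_x^p` of the lazy simple random walk at `x` with idleness `p`. -/
def mu {V : Type*} [Fintype V] (G : SimpleGraph V) (p : ℝ) (x : V) : V → ℝ :=
  fun z => if z = x then p else if G.Adj x z then (1 - p) / (deg G x : ℝ) else 0

/-- The Wasserstein distance `W₁(μ₁, μ₂)` with respect to the combinatorial distance of `G`:
the infimum of the total transport cost over all transport plans from `μ₁` to `μ₂`. -/
def W1 {V : Type*} [Fintype V] (G : SimpleGraph V) (μ₁ μ₂ : V → ℝ) : ℝ :=
  sInf {c : ℝ | ∃ π : V → V → ℝ,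
    (∀ x y, 0 ≤ π x y ∧ π x y ≤ 1) ∧
    (∀ x, ∑ y, π x y = μ₁ x) ∧
    (∀ y, ∑ x, π x y = μ₂ y) ∧
    c = ∑ x, ∑ y, (G.dist x y : ℝ) * π x y}

/-- The `p`-Ollivier-Ricci curvature `κ_p(x,y) = 1 - W₁(μ_x^p, μ_y^p)`. -/
def kappa {V : Type*} [Fintype V] (G : SimpleGraph V) (p : ℝ) (x y : V) : ℝ :=
  1 - W1 G (mu G p x) (mu G p y)

/-- The Lin-Lu-Yau curvature `κ_LLY(x,y) = lim_{p→1} κ_p(x,y)/(1-p)`. -/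
def kappaLLY {V : Type*} [Fintype V] (G : SimpleGraph V) (x y : V) : ℝ :=
  Filter.limUnder (nhdsWithin 1 (Set.Iio 1)) (fun p => kappa G p x y / (1 - p))

/-- `G` is Bonnet-Myers sharp if the infimum of `κ_LLY` over the edges equals `2/diam(G)`. -/
def BMSharp {V : Type*} [Fintype V] (G : SimpleGraph V) : Prop :=
  sInf {r : ℝ | ∃ x y, G.Adj x y ∧ r = kappaLLY G x y} = 2 / (diam G : ℝ)

/-- `G` is obtained from the complete graph on its vertex set by deleting a matching
(a set of pairwise disjoint edges, encoded as a symmetric irreflexive relation in which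
every vertex has at most one partner). -/
def IsMatchingDeletionOfComplete {V : Type*} (G : SimpleGraph V) : Prop :=
  ∃ M : V → V → Prop, Symmetric M ∧ (∀ x, ¬ M x x) ∧
    (∀ x y z, M x y → M x z → y = z) ∧
    (∀ x y, G.Adj x y ↔ x ≠ y ∧ ¬ M x y)

/-- The graph `G(a,b)` on `2a+b` vertices `u_1, …, u_{2a}, v_1, …, v_b` (encoded as
`Fin (2a+b)`, with `u_i` the index `i-1` and `v_j` the index `2a+j-1`), in which two distinct
vertices are adjacent unless they form a pair `{u_{2i-1}, u_{2i}}`, i.e. `G(a,b)` is the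
complete graph `K_{2a+b}` with a matching of size `a` deleted. -/
def Gab (a b : ℕ) : SimpleGraph (Fin (2*a+b)) where
  Adj x y := x ≠ y ∧ ¬((x : ℕ) < 2*a ∧ (y : ℕ) < 2*a ∧ (x : ℕ)/2 = (y : ℕ)/2)
  symm := by
    constructor
    intro x y h
    exact ⟨h.1.symm, fun hc => h.2 ⟨hc.2.1, hc.1, hc.2.2.symm⟩⟩
  loopless := by constructor; intro x h; exact h.1 rfl

/-- The antitree `AT(a_1, …, a_N)` on the disjoint union of sets `V_1, …, V_N` with
`|V_k| = a_k` (0-indexed here: `V_k` is `Fin (a k)` for `k : Fin N`): two distinct vertices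
are adjacent iff they lie in the same set or in consecutive sets. -/
def antitree (N : ℕ) (a : Fin N → ℕ) : SimpleGraph (Σ k : Fin N, Fin (a k)) where
  Adj x y := x ≠ y ∧
    ((x.1 : ℕ) = (y.1 : ℕ) ∨ (x.1 : ℕ) + 1 = (y.1 : ℕ) ∨ (y.1 : ℕ) + 1 = (x.1 : ℕ))
  symm := by
    constructor
    intro x y h
    refine ⟨h.1.symm, ?_⟩
    rcases h.2 with h2 | h2 | h2
    · exact Or.inl h2.symm
    · exact Or.inr (Or.inr h2)
    · exact Or.inr (Or.inl h2)
  loopless := by constructor; intro x h; exact h.1 rfl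

/-!
Write `Δf(x)` for the mean of `f z - f x` over the neighbors `z` of `x`. Testing the transport
problem against a 1-Lipschitz `f` with `f y - f x = 1` gives `κ_LLY(x,y) ≤ Δf(x) - Δf(y)` on an
edge. For `f = d(x,·)` this telescopes along geodesics: if `κ_LLY ≥ K` on all edges, then
`-1 ≤ Δf(y) ≤ 1 - K d(x,y)`, which is the Bonnet-Myers bound `K diam(G) ≤ 2`, and where it is
attained every neighbor of `y` is closer to `x` than `y` is.

If `K = 1` and the diameter is 2, vertices at distance 2 therefore have the same neighbors. Two
non-neighbors of `x` would then have a common neighbor `y` adjacent to `x`, and these two vertices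
make `Δf(y)` positive, against `Δf(y) ≤ 0`.

Conversely let `x ∼ y` with `d_y ≤ d_x` in a complete graph minus a matching. For the idleness
`p = 1/(d_x + 1)` the measure at `x` is uniform on the closed ball of `x`, and it dominates the
measure at `y` at one vertex only, from where a mass of at most `p` moves by one step. Hence
`κ_p(x,y) ≥ 1 - p`, and since `κ_p/(1 - p)` increases in `p`, `κ_LLY(x,y) ≥ 1`.
-/

section GraphDistance

variable {V : Type*} {G : SimpleGraph V}

lemma dist_sub_dist_le (hG : G.Connected) (x u v : V) :
    (G.dist x v : ℝ) - G.dist x u ≤ G.dist u v := by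
  rw [sub_le_iff_le_add']
  exact_mod_cast hG.dist_triangle

lemma dist_sub_one_le_of_adj (hG : G.Connected) (x : V) {y z : V} (hyz : G.Adj y z) :
    (G.dist x y : ℝ) - 1 ≤ G.dist x z := by
  have := dist_sub_dist_le hG x z y
  rw [SimpleGraph.dist_eq_one_iff_adj.2 hyz.symm] at this
  push_cast at this
  linarith

lemma exists_adj_of_dist_eq_succ (hG : G.Connected) {x z : V} {n : ℕ}
    (h : G.dist x z = n + 1) : ∃ y, G.Adj y z ∧ G.dist x y = n := by
  obtain ⟨p, hp⟩ := hG.exists_walk_length_eq_dist z x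
  rw [SimpleGraph.dist_comm, h] at hp
  cases p with
  | nil => simp at hp
  | @cons _ y _ hzy q =>
    have hle : G.dist x y ≤ n := by
      rw [SimpleGraph.dist_comm]
      exact (SimpleGraph.dist_le q).trans_eq (Nat.succ_injective hp)
    have hge : n + 1 ≤ G.dist x y + 1 := by
      rw [← h, ← SimpleGraph.dist_eq_one_iff_adj.2 hzy.symm]
      exact hG.dist_triangle
    exact ⟨y, hzy.symm, by omega⟩

lemma isMatchingDeletionOfComplete_iff :
    IsMatchingDeletionOfComplete G ↔ ∀ x y z, Gᶜ.Adj x y → Gᶜ.Adj x z → y = z := by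
  constructor
  · rintro ⟨M, -, -, hM, hadj⟩ x y z hy hz
    have mem_of_compl_adj {w : V} (hw : Gᶜ.Adj x w) : M x w := by
      by_contra hMw
      exact hw.2 ((hadj x w).2 ⟨hw.1, hMw⟩)
    exact hM x y z (mem_of_compl_adj hy) (mem_of_compl_adj hz)
  · intro h
    refine ⟨Gᶜ.Adj, fun _ _ hxy => hxy.symm, fun _ => Gᶜ.irrefl, h, fun x y => ?_⟩
    have := @SimpleGraph.Adj.ne _ G x y
    rw [SimpleGraph.compl_adj]
    tauto

lemma exists_forall_ne_adj (h : ∀ x y z, Gᶜ.Adj x y → Gᶜ.Adj x z → y = z) (y : V) :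
    ∃ s, (∀ v, v ≠ s → v = y ∨ G.Adj y v) ∧ ∀ v, v ≠ s → v ≠ y → G.Adj s v := by
  have adj_of_not_compl {u v : V} (hne : v ≠ u) (huv : ¬Gᶜ.Adj u v) : G.Adj u v := by
    by_contra hadj
    exact huv ⟨hne.symm, hadj⟩
  by_cases hy : ∃ s, Gᶜ.Adj y s
  · obtain ⟨s, hys⟩ := hy
    refine ⟨s, fun v hvs => or_iff_not_imp_left.2 fun hvy => adj_of_not_compl hvy fun hyv =>
      hvs (h y v s hyv hys), fun v hvs hvy => adj_of_not_compl hvs fun hsv =>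
      hvy (h s v y hsv hys.symm)⟩
  · push Not at hy
    exact ⟨y, fun v hvy => .inr (adj_of_not_compl hvy (hy v)),
      fun v hvy _ => adj_of_not_compl hvy (hy v)⟩

end GraphDistance

section Wasserstein

variable {V : Type*} [Fintype V] {G : SimpleGraph V} {μ ν μ' ν' : V → ℝ} {π π' : V → V → ℝ}

/-- Transport plans from `μ` to `ν`. The bound `π ≤ 1` in the definition of `W1` is left out
because it is automatic for probability vectors. -/
structure IsCoupling (μ ν : V → ℝ) (π : V → V → ℝ) : Prop where
  nonneg : ∀ u v, 0 ≤ π u v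
  sum_right : ∀ u, ∑ v, π u v = μ u
  sum_left : ∀ v, ∑ u, π u v = ν v

/-- The total cost of a transport plan `π` with respect to the graph distance: the quantity
minimized by `W1`. -/
def transportCost (G : SimpleGraph V) (π : V → V → ℝ) : ℝ :=
  ∑ u, ∑ v, (G.dist u v : ℝ) * π u v

lemma IsCoupling.le_one (h : IsCoupling μ ν π) (hμ : μ ∈ stdSimplex ℝ V) (u v : V) :
    π u v ≤ 1 :=
  calc π u v ≤ ∑ v, π u v := single_le_sum (fun v _ => h.nonneg u v) (mem_univ v)
    _ = μ u := h.sum_right u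
    _ ≤ ∑ u, μ u := single_le_sum (fun u _ => hμ.1 u) (mem_univ u)
    _ = 1 := hμ.2

lemma W1_eq_sInf_image (hμ : μ ∈ stdSimplex ℝ V) :
    W1 G μ ν = sInf (transportCost G '' {π | IsCoupling μ ν π}) := by
  unfold W1
  congr 1
  ext c
  constructor
  · rintro ⟨π, hπ, hr, hl, rfl⟩
    exact ⟨π, ⟨fun u v => (hπ u v).1, hr, hl⟩, rfl⟩
  · rintro ⟨π, hπ, rfl⟩
    exact ⟨π, fun u v => ⟨hπ.nonneg u v, hπ.le_one hμ u v⟩, hπ.sum_right, hπ.sum_left, rfl⟩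

lemma isCompact_setOf_isCoupling (hμ : μ ∈ stdSimplex ℝ V) :
    IsCompact {π | IsCoupling μ ν π} := by
  have heq : {π | IsCoupling μ ν π} = {π : V → V → ℝ | (∀ u v, 0 ≤ π u v) ∧
      (∀ u, ∑ v, π u v = μ u) ∧ ∀ v, ∑ u, π u v = ν v} :=
    Set.ext fun π => ⟨fun h => ⟨h.1, h.2, h.3⟩, fun h => ⟨h.1, h.2.1, h.2.2⟩⟩
  have hclosed : IsClosed {π | IsCoupling μ ν π} := by
    simp only [heq, Set.ofPred_and, Set.ofPred_forall]
    refine .inter ?_ (.inter ?_ ?_)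
    · exact isClosed_iInter fun u => isClosed_iInter fun v =>
        isClosed_le (by fun_prop) (by fun_prop)
    all_goals exact isClosed_iInter fun u => isClosed_eq (by fun_prop) (by fun_prop)
  exact isCompact_Icc.of_isClosed_subset hclosed fun π hπ =>
    ⟨hπ.nonneg, fun u v => hπ.le_one hμ u v⟩

lemma isCompact_image_transportCost (hμ : μ ∈ stdSimplex ℝ V) :
    IsCompact (transportCost G '' {π | IsCoupling μ ν π}) :=
  (isCompact_setOf_isCoupling hμ).image (by unfold transportCost; fun_prop)

lemma isCoupling_mul (hμ : μ ∈ stdSimplex ℝ V) (hν : ν ∈ stdSimplex ℝ V) :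
    IsCoupling μ ν fun u v => μ u * ν v where
  nonneg u v := mul_nonneg (hμ.1 u) (hν.1 v)
  sum_right u := by rw [← mul_sum, hν.2, mul_one]
  sum_left v := by rw [← sum_mul, hμ.2, one_mul]

lemma IsCoupling.W1_le_transportCost (h : IsCoupling μ ν π) (hμ : μ ∈ stdSimplex ℝ V) :
    W1 G μ ν ≤ transportCost G π := by
  rw [W1_eq_sInf_image hμ]
  exact csInf_le (isCompact_image_transportCost hμ).bddBelow ⟨π, h, rfl⟩

lemma exists_isCoupling_transportCost_eq_W1 (G : SimpleGraph V) (hμ : μ ∈ stdSimplex ℝ V)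
    (hν : ν ∈ stdSimplex ℝ V) : ∃ π, IsCoupling μ ν π ∧ transportCost G π = W1 G μ ν := by
  rw [W1_eq_sInf_image hμ]
  exact (isCompact_image_transportCost hμ).sInf_mem ⟨_, _, isCoupling_mul hμ hν, rfl⟩

lemma W1_comm (μ ν : V → ℝ) : W1 G μ ν = W1 G ν μ := by
  unfold W1
  congr 1
  ext c
  constructor <;>
  · rintro ⟨π, hπ, hr, hl, rfl⟩
    refine ⟨fun u v => π v u, fun u v => hπ v u, hl, hr, ?_⟩
    rw [sum_comm]
    simp only [G.dist_comm]

lemma IsCoupling.sum_mul_sub_sum_mul_le_transportCost (h : IsCoupling μ ν π) {f : V → ℝ}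
    (hf : ∀ u v, f v - f u ≤ G.dist u v) :
    ∑ v, f v * ν v - ∑ u, f u * μ u ≤ transportCost G π :=
  calc ∑ v, f v * ν v - ∑ u, f u * μ u
      = ∑ v, ∑ u, f v * π u v - ∑ u, ∑ v, f u * π u v := by
        simp only [← mul_sum, h.sum_left, h.sum_right]
    _ = ∑ u, ∑ v, (f v - f u) * π u v := by
        rw [sum_comm]
        simp only [sub_mul, sum_sub_distrib]
    _ ≤ transportCost G π := sum_le_sum fun u _ => sum_le_sum fun v _ =>
        mul_le_mul_of_nonneg_right (hf u v) (h.nonneg u v)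

lemma sum_mul_sub_sum_mul_le_W1 (hμ : μ ∈ stdSimplex ℝ V) (hν : ν ∈ stdSimplex ℝ V) {f : V → ℝ}
    (hf : ∀ u v, f v - f u ≤ G.dist u v) :
    ∑ v, f v * ν v - ∑ u, f u * μ u ≤ W1 G μ ν := by
  obtain ⟨π, hπ, hcost⟩ := exists_isCoupling_transportCost_eq_W1 G hμ hν
  exact hcost ▸ hπ.sum_mul_sub_sum_mul_le_transportCost hf

lemma IsCoupling.smul_add_smul (h : IsCoupling μ ν π) (h' : IsCoupling μ' ν' π') {a b : ℝ}
    (ha : 0 ≤ a) (hb : 0 ≤ b) :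
    IsCoupling (a • μ + b • μ') (a • ν + b • ν') (a • π + b • π') where
  nonneg u v := add_nonneg (mul_nonneg ha (h.nonneg u v)) (mul_nonneg hb (h'.nonneg u v))
  sum_right u := by simp [sum_add_distrib, ← mul_sum, h.sum_right, h'.sum_right]
  sum_left v := by simp [sum_add_distrib, ← mul_sum, h.sum_left, h'.sum_left]

lemma transportCost_smul_add_smul (a b : ℝ) (π π' : V → V → ℝ) :
    transportCost G (a • π + b • π') = a * transportCost G π + b * transportCost G π' := by
  simp [transportCost, mul_add, sum_add_distrib, mul_sum, mul_left_comm]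

lemma convexOn_W1 (G : SimpleGraph V) :
    ConvexOn ℝ (stdSimplex ℝ V ×ˢ stdSimplex ℝ V) fun m => W1 G m.1 m.2 := by
  refine ⟨(convex_stdSimplex ℝ V).prod (convex_stdSimplex ℝ V), ?_⟩
  rintro ⟨μ, ν⟩ ⟨hμ, hν⟩ ⟨μ', ν'⟩ ⟨hμ', hν'⟩ a b ha hb hab
  obtain ⟨π, hπ, hcost⟩ := exists_isCoupling_transportCost_eq_W1 G hμ hν
  obtain ⟨π', hπ', hcost'⟩ := exists_isCoupling_transportCost_eq_W1 G hμ' hν'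
  simp only [smul_eq_mul, ← hcost, ← hcost', ← transportCost_smul_add_smul]
  exact (hπ.smul_add_smul hπ' ha hb).W1_le_transportCost
    (convex_stdSimplex ℝ V hμ hμ' ha hb hab)

-- At `(s, s)` the two summands add up to `ν s`, so the possibly negative second one is harmless.
lemma isCoupling_of_forall_ne_le (hμ : μ ∈ stdSimplex ℝ V) (hν : ν ∈ stdSimplex ℝ V) {s : V}
    (h : ∀ v, v ≠ s → μ v ≤ ν v) :
    IsCoupling μ ν fun u v =>
      (if u = v then μ u else 0) + if u = s then ν v - μ v else 0 where
  nonneg u v := by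
    rcases eq_or_ne u s with rfl | hu
    · rcases eq_or_ne u v with rfl | huv
      · simpa using hν.1 u
      · simpa [huv] using h v huv.symm
    · simpa [hu] using ite_nonneg (hμ.1 u) le_rfl
  sum_right u := by
    have hsum : ∑ v, (ν v - μ v) = 0 := by rw [sum_sub_distrib, hμ.2, hν.2, sub_self]
    split_ifs <;> simp [sum_add_distrib, hsum]
  sum_left v := by simp [sum_add_distrib]

lemma W1_le_sum_dist_mul_sub (hμ : μ ∈ stdSimplex ℝ V) (hν : ν ∈ stdSimplex ℝ V) {s : V}
    (h : ∀ v, v ≠ s → μ v ≤ ν v) : W1 G μ ν ≤ ∑ v, G.dist s v * (ν v - μ v) := by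
  refine ((isCoupling_of_forall_ne_le hμ hν h).W1_le_transportCost hμ).trans_eq ?_
  simp [transportCost, mul_add, sum_add_distrib]

lemma W1_single_single (hG : G.Connected) (x y : V) :
    W1 G (Pi.single x 1) (Pi.single y 1) = G.dist x y := by
  have hx := single_mem_stdSimplex ℝ x
  have hy := single_mem_stdSimplex ℝ y
  apply le_antisymm
  · refine (W1_le_sum_dist_mul_sub hx hy (s := x) fun v hv => ?_).trans_eq ?_
    · simpa [Pi.single_eq_of_ne hv] using hy.1 v
    · simp [mul_sub, sum_sub_distrib, Pi.single_apply]
  · simpa [Pi.single_apply] using sum_mul_sub_sum_mul_le_W1 hx hy (dist_sub_dist_le hG x)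

end Wasserstein

section RandomWalk

variable {V : Type*} [Fintype V] {G : SimpleGraph V} {x y : V} {p : ℝ}

lemma deg_pos_of_adj (h : G.Adj x y) : 0 < deg G x :=
  card_pos.2 ⟨y, by simpa using h⟩

/-- The random walk Laplacian `Δf(x)`: the mean of `f z - f x` over the neighbors `z` of `x`,
and `0` at isolated vertices. -/
def walkLaplacian (G : SimpleGraph V) (f : V → ℝ) (x : V) : ℝ :=
  (∑ z with G.Adj x z, (f z - f x)) / deg G x

lemma sum_mul_mu (hx : 0 < deg G x) (p : ℝ) (f : V → ℝ) :
    ∑ z, f z * mu G p x z = f x + (1 - p) * walkLaplacian G f x := by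
  have hsplit (z : V) : f z * mu G p x z = (if z = x then p * f x else 0) +
      if G.Adj x z then f z * ((1 - p) / deg G x) else 0 := by
    rcases eq_or_ne z x with rfl | hz
    · simp [mu, mul_comm]
    · simp [mu, hz]
  have hdeg : (#{z | G.Adj x z} : ℝ) = deg G x := rfl
  simp only [hsplit, sum_add_distrib, sum_ite_eq', mem_univ, if_true, ← sum_filter, ← sum_mul,
    walkLaplacian, sum_sub_distrib, sum_const, nsmul_eq_mul, hdeg]
  field_simp
  ring

lemma mu_mem_stdSimplex (hx : 0 < deg G x) (hp : p ∈ Set.Icc (0 : ℝ) 1) :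
    mu G p x ∈ stdSimplex ℝ V := by
  refine ⟨fun z => ?_, ?_⟩
  · unfold mu
    have := sub_nonneg.2 hp.2
    have := hp.1
    split_ifs <;> positivity
  · simpa [walkLaplacian] using sum_mul_mu hx p fun _ => 1

lemma mu_one (G : SimpleGraph V) (x : V) : mu G 1 x = Pi.single x 1 := by
  ext z
  simp [mu, Pi.single_apply]

lemma mu_convexCombo (x : V) {a b : ℝ} (hab : a + b = 1) (p q : ℝ) :
    mu G (a * p + b * q) x = a • mu G p x + b • mu G q x := by
  ext z
  obtain rfl : b = 1 - a := by linarith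
  simp only [mu, Pi.add_apply, Pi.smul_apply, smul_eq_mul]
  split_ifs <;> ring

lemma neg_one_le_walkLaplacian {f : V → ℝ} (hf : ∀ z, G.Adj x z → f x - 1 ≤ f z) :
    -1 ≤ walkLaplacian G f x := by
  rcases (deg G x).eq_zero_or_pos with h0 | hx
  · simp [walkLaplacian, h0]
  · rw [walkLaplacian, le_div_iff₀ (by positivity), mul_comm, ← nsmul_eq_mul]
    refine card_nsmul_le_sum _ _ _ fun z hz => ?_
    linarith [hf z (by simpa using hz)]

lemma eq_sub_one_of_walkLaplacian_le_neg_one {f : V → ℝ}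
    (hf : ∀ z, G.Adj x z → f x - 1 ≤ f z) (h : walkLaplacian G f x ≤ -1) {z : V}
    (hz : G.Adj x z) : f z = f x - 1 := by
  have hnonneg : ∀ w ∈ ({w | G.Adj x w} : Finset V), 0 ≤ f w - f x + 1 := fun w hw => by
    linarith [hf w (by simpa using hw)]
  have hsum : ∑ w with G.Adj x w, (f w - f x + 1) ≤ 0 := by
    have hx : (0 : ℝ) < deg G x := by exact_mod_cast deg_pos_of_adj hz
    rw [walkLaplacian, div_le_iff₀ hx] at h
    have hdeg : (#{w | G.Adj x w} : ℝ) = deg G x := rfl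
    rw [sum_add_distrib, sum_const, nsmul_one, hdeg]
    linarith
  linarith [hf z hz, single_le_sum hnonneg (a := z) (by simpa using hz)]

lemma walkLaplacian_dist_self_le (x : V) : walkLaplacian G (fun w => G.dist x w) x ≤ 1 := by
  have hsum : ∑ z with G.Adj x z, ((G.dist x z : ℝ) - G.dist x x) = deg G x := by
    rw [deg, card_eq_sum_ones, Nat.cast_sum]
    refine sum_congr rfl fun z hz => ?_
    simp [SimpleGraph.dist_eq_one_iff_adj.2 (mem_filter.1 hz).2]
  rw [walkLaplacian, hsum]
  exact div_self_le_one _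

lemma walkLaplacian_dist_of_adj (hG : G.Connected) (hxy : G.Adj x y) :
    walkLaplacian G (fun w => G.dist x w) y =
      (#{z | G.Adj y z ∧ G.dist x z = 2} - 1) / deg G y := by
  have hd : G.dist x y = 1 := SimpleGraph.dist_eq_one_iff_adj.2 hxy
  have hterm : ∀ z ∈ ({z | G.Adj y z} : Finset V), (G.dist x z : ℝ) - G.dist x y =
      (if G.dist x z = 2 then 1 else 0) - if z = x then 1 else 0 := by
    intro z hz
    have hyz : G.dist y z = 1 := SimpleGraph.dist_eq_one_iff_adj.2 (by simpa using hz)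
    have hle : G.dist x z ≤ G.dist x y + G.dist y z := hG.dist_triangle
    rcases eq_or_ne z x with rfl | hne
    · simp [hd]
    · have hpos : 0 < G.dist x z := hG.pos_dist_of_ne hne.symm
      obtain h | h : G.dist x z = 1 ∨ G.dist x z = 2 := by omega
      all_goals norm_num [h, hd, hne]
  rw [walkLaplacian, sum_congr rfl hterm, sum_sub_distrib, sum_boole, sum_ite_eq', filter_filter]
  simp [hxy.symm]

end RandomWalk

section Curvature

variable {V : Type*} [Fintype V] {G : SimpleGraph V} {x y : V} {p : ℝ}

lemma kappaLLY_comm (x y : V) : kappaLLY G x y = kappaLLY G y x := by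
  simp only [kappaLLY, kappa, W1_comm (mu G _ x)]

lemma kappa_one (hG : G.Connected) (x y : V) : kappa G 1 x y = 1 - G.dist x y := by
  rw [kappa, mu_one, mu_one, W1_single_single hG]

lemma concaveOn_kappa (hx : 0 < deg G x) (hy : 0 < deg G y) :
    ConcaveOn ℝ (Set.Icc 0 1) fun p => kappa G p x y := by
  refine ⟨convex_Icc 0 1, fun p hp q hq a b ha hb hab => ?_⟩
  have hW : W1 G (a • mu G p x + b • mu G q x) (a • mu G p y + b • mu G q y) ≤
      a * W1 G (mu G p x) (mu G p y) + b * W1 G (mu G q x) (mu G q y) :=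
    (convexOn_W1 G).2 (x := (mu G p x, mu G p y)) (y := (mu G q x, mu G q y))
      ⟨mu_mem_stdSimplex hx hp, mu_mem_stdSimplex hy hp⟩
      ⟨mu_mem_stdSimplex hx hq, mu_mem_stdSimplex hy hq⟩ ha hb hab
  simp only [kappa, smul_eq_mul, mu_convexCombo _ hab]
  linarith

lemma monotoneOn_kappa_div_one_sub (hG : G.Connected) (hxy : G.Adj x y) :
    MonotoneOn (fun p => kappa G p x y / (1 - p)) (Set.Ico 0 1) := by
  have hslope (p : ℝ) : kappa G p x y / (1 - p) = -slope (fun p => kappa G p x y) 1 p := by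
    rw [slope_def_field, kappa_one hG, SimpleGraph.dist_eq_one_iff_adj.2 hxy, Nat.cast_one,
      sub_self, sub_zero, ← div_neg, neg_sub]
  have hanti := (concaveOn_kappa (deg_pos_of_adj hxy) (deg_pos_of_adj hxy.symm)).slope_anti
    (Set.right_mem_Icc.2 zero_le_one)
  simp only [hslope]
  exact hanti.neg.mono fun p hp => ⟨Set.Ico_subset_Icc_self hp, hp.2.ne⟩

lemma kappa_div_one_sub_le (hxy : G.Adj x y) {f : V → ℝ} (hf : ∀ u v, f v - f u ≤ G.dist u v)
    (h1 : f y - f x = 1) (hp : p ∈ Set.Ico (0 : ℝ) 1) :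
    kappa G p x y / (1 - p) ≤ walkLaplacian G f x - walkLaplacian G f y := by
  have hx := deg_pos_of_adj hxy
  have hy := deg_pos_of_adj hxy.symm
  have hp' := Set.Ico_subset_Icc_self hp
  have hdual := sum_mul_sub_sum_mul_le_W1 (mu_mem_stdSimplex hx hp') (mu_mem_stdSimplex hy hp') hf
  rw [sum_mul_mu hx, sum_mul_mu hy] at hdual
  rw [div_le_iff₀ (sub_pos.2 hp.2), kappa]
  linarith

lemma tendsto_kappaLLY (hG : G.Connected) (hxy : G.Adj x y) :
    Filter.Tendsto (fun p => kappa G p x y / (1 - p)) (nhdsWithin 1 (Set.Iio 1))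
      (nhds (kappaLLY G x y)) := by
  have hbdd : BddAbove ((fun p => kappa G p x y / (1 - p)) '' Set.Ioo 0 1) := by
    refine ⟨_, Set.forall_mem_image.2 fun p hp => kappa_div_one_sub_le hxy
      (dist_sub_dist_le hG x) ?_ (Set.Ioo_subset_Ico_self hp)⟩
    simp [SimpleGraph.dist_eq_one_iff_adj.2 hxy]
  have hlim := ((monotoneOn_kappa_div_one_sub hG hxy).mono
    Set.Ioo_subset_Ico_self).tendsto_nhdsWithin_Ioo_left (Set.nonempty_Ioo.2 one_pos) hbdd
  exact tendsto_nhds_limUnder ⟨_, hlim⟩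

lemma kappaLLY_le_walkLaplacian_sub (hG : G.Connected) (hxy : G.Adj x y) {f : V → ℝ}
    (hf : ∀ u v, f v - f u ≤ G.dist u v) (h1 : f y - f x = 1) :
    kappaLLY G x y ≤ walkLaplacian G f x - walkLaplacian G f y := by
  refine le_of_tendsto (tendsto_kappaLLY hG hxy) ?_
  filter_upwards [Ico_mem_nhdsLT one_pos] with p hp
  exact kappa_div_one_sub_le hxy hf h1 hp

lemma kappa_div_one_sub_le_kappaLLY (hG : G.Connected) (hxy : G.Adj x y)
    (hp : p ∈ Set.Ico (0 : ℝ) 1) : kappa G p x y / (1 - p) ≤ kappaLLY G x y := by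
  refine ge_of_tendsto (tendsto_kappaLLY hG hxy) ?_
  filter_upwards [Ico_mem_nhdsLT hp.2] with q hq
  exact monotoneOn_kappa_div_one_sub hG hxy hp ⟨hp.1.trans hq.1, hq.2⟩ hq.1

end Curvature

section BonnetMyers

variable {V : Type*} [Fintype V] {G : SimpleGraph V} {K : ℝ}

lemma walkLaplacian_dist_le_of_le_kappaLLY (hG : G.Connected)
    (hK : ∀ u v, G.Adj u v → K ≤ kappaLLY G u v) (x y : V) :
    walkLaplacian G (fun w => G.dist x w) y ≤ 1 - K * G.dist x y := by
  induction hn : G.dist x y generalizing y with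
  | zero =>
    obtain rfl : x = y := hG.dist_eq_zero_iff.1 hn
    simpa using walkLaplacian_dist_self_le x
  | succ n ih =>
    obtain ⟨z, hzy, hz⟩ := exists_adj_of_dist_eq_succ hG hn
    have hle := kappaLLY_le_walkLaplacian_sub hG hzy (dist_sub_dist_le hG x) (by simp [hn, hz])
    push_cast
    linarith [hK z y hzy, ih z hz]

theorem mul_dist_le_two_of_le_kappaLLY (hG : G.Connected)
    (hK : ∀ u v, G.Adj u v → K ≤ kappaLLY G u v) (x y : V) : K * G.dist x y ≤ 2 := by
  linarith [walkLaplacian_dist_le_of_le_kappaLLY hG hK x y,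
    neg_one_le_walkLaplacian (x := y) (f := fun w => G.dist x w) fun _ hz =>
      dist_sub_one_le_of_adj hG x hz]

lemma dist_add_one_eq_of_mul_dist_eq_two (hG : G.Connected)
    (hK : ∀ u v, G.Adj u v → K ≤ kappaLLY G u v) {x y z : V} (hxy : K * G.dist x y = 2)
    (hyz : G.Adj y z) : G.dist x z + 1 = G.dist x y := by
  have hle : walkLaplacian G (fun w => G.dist x w) y ≤ -1 := by
    linarith [walkLaplacian_dist_le_of_le_kappaLLY hG hK x y]
  have heq := eq_sub_one_of_walkLaplacian_le_neg_one
    (fun w hw => dist_sub_one_le_of_adj hG x hw) hle hyz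
  rw [eq_sub_iff_add_eq] at heq
  exact_mod_cast heq

lemma dist_le_diam (x y : V) : G.dist x y ≤ diam G :=
  le_sup (f := fun xy : V × V => G.dist xy.1 xy.2) (mem_univ (x, y))

lemma exists_dist_eq_diam [Nonempty V] (G : SimpleGraph V) : ∃ x y, G.dist x y = diam G := by
  obtain ⟨⟨x, y⟩, -, h⟩ :=
    exists_mem_eq_sup univ univ_nonempty fun xy : V × V => G.dist xy.1 xy.2
  exact ⟨x, y, h.symm⟩

theorem bmSharp_iff_forall_adj_le_kappaLLY (hG : G.Connected) (hdiam : 0 < diam G) :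
    BMSharp G ↔ ∀ x y, G.Adj x y → 2 / diam G ≤ kappaLLY G x y := by
  have hbdd : BddBelow {r | ∃ x y, G.Adj x y ∧ r = kappaLLY G x y} := by
    refine ((Set.finite_range fun xy : V × V => kappaLLY G xy.1 xy.2).subset ?_).bddBelow
    rintro _ ⟨x, y, -, rfl⟩
    exact ⟨(x, y), rfl⟩
  have inf_le {x y : V} (hxy : G.Adj x y) := csInf_le hbdd ⟨x, y, hxy, rfl⟩
  have := hG.nonempty
  obtain ⟨x, y, hxy⟩ := exists_dist_eq_diam G
  refine ⟨fun h _ _ huv => h ▸ inf_le huv, fun h => le_antisymm ?_ ?_⟩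
  · rw [le_div_iff₀ (by positivity), ← hxy]
    exact mul_dist_le_two_of_le_kappaLLY hG (fun _ _ => inf_le) x y
  · obtain ⟨z, hzy, -⟩ := exists_adj_of_dist_eq_succ hG (hxy.trans (Nat.succ_pred hdiam.ne').symm)
    refine le_csInf ⟨_, z, y, hzy, rfl⟩ ?_
    rintro _ ⟨u, v, huv, rfl⟩
    exact h u v huv

end BonnetMyers

section DiameterTwo

variable {V : Type*} [Fintype V] {G : SimpleGraph V}

lemma dist_eq_two_of_compl_adj (hG : G.Connected) (hdiam : diam G = 2) {x y : V}
    (h : Gᶜ.Adj x y) : G.dist x y = 2 :=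
  le_antisymm (hdiam ▸ dist_le_diam x y) (hG.one_lt_dist_of_ne_of_not_adj h.1 h.2)

lemma card_adj_dist_eq_two_le_one (hG : G.Connected)
    (hK : ∀ u v, G.Adj u v → 1 ≤ kappaLLY G u v) {x y : V} (hxy : G.Adj x y) :
    #{z | G.Adj y z ∧ G.dist x z = 2} ≤ 1 := by
  have hle := walkLaplacian_dist_le_of_le_kappaLLY hG hK x y
  have hy : (0 : ℝ) < deg G y := by exact_mod_cast deg_pos_of_adj hxy.symm
  rw [walkLaplacian_dist_of_adj hG hxy, SimpleGraph.dist_eq_one_iff_adj.2 hxy, Nat.cast_one,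
    mul_one, sub_self, div_le_iff₀ hy, zero_mul, sub_nonpos] at hle
  exact_mod_cast hle

lemma eq_of_dist_eq_two_of_one_le_kappaLLY (hG : G.Connected)
    (hK : ∀ u v, G.Adj u v → 1 ≤ kappaLLY G u v)
    {x z z' : V} (hz : G.dist x z = 2) (hz' : G.dist x z' = 2) : z = z' := by
  obtain ⟨y, hyz, hy⟩ := exists_adj_of_dist_eq_succ hG hz
  have hxy : G.Adj x y := SimpleGraph.dist_eq_one_iff_adj.1 hy
  have hyz' : G.Adj y z' := by
    have := dist_add_one_eq_of_mul_dist_eq_two hG hK (x := z') (y := x)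
      (by norm_num [SimpleGraph.dist_comm, hz']) hxy
    rw [G.dist_comm (u := z'), G.dist_comm (u := z'), hz'] at this
    exact SimpleGraph.dist_eq_one_iff_adj.1 (Nat.succ_injective this)
  exact card_le_one.1 (card_adj_dist_eq_two_le_one hG hK hxy) z (by simp [hyz, hz])
    z' (by simp [hyz', hz'])

end DiameterTwo

section MatchingDeletion

variable {V : Type*} [Fintype V] {G : SimpleGraph V} {x y : V}

lemma inv_deg_add_one_mem_Ico (hx : 0 < deg G x) : (deg G x + 1 : ℝ)⁻¹ ∈ Set.Ico (0 : ℝ) 1 :=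
  ⟨by positivity, inv_lt_one_of_one_lt₀ (by simpa using hx)⟩

lemma one_sub_inv_deg_add_one_div_deg (hx : 0 < deg G x) :
    (1 - (deg G x + 1 : ℝ)⁻¹) / deg G x = (deg G x + 1 : ℝ)⁻¹ := by
  field_simp
  ring

lemma mu_inv_deg_add_one (hx : 0 < deg G x) (v : V) :
    mu G (deg G x + 1 : ℝ)⁻¹ x v = if v = x ∨ G.Adj x v then (deg G x + 1 : ℝ)⁻¹ else 0 := by
  rw [mu, one_sub_inv_deg_add_one_div_deg hx, ite_or]

lemma inv_deg_add_one_le_mu (hy : 0 < deg G y) (hyx : deg G y ≤ deg G x) {v : V}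
    (hv : v = y ∨ G.Adj y v) : (deg G x + 1 : ℝ)⁻¹ ≤ mu G (deg G x + 1 : ℝ)⁻¹ y v := by
  have hx := hy.trans_le hyx
  rcases eq_or_ne v y with rfl | hvy
  · simp [mu]
  · rw [mu, if_neg hvy, if_pos (hv.resolve_left hvy)]
    calc (deg G x + 1 : ℝ)⁻¹ = (1 - (deg G x + 1 : ℝ)⁻¹) / deg G x :=
          (one_sub_inv_deg_add_one_div_deg hx).symm
      _ ≤ (1 - (deg G x + 1 : ℝ)⁻¹) / deg G y := by
          have := sub_nonneg.2 (inv_deg_add_one_mem_Ico hx).2.le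
          gcongr

lemma W1_mu_inv_deg_add_one_le (hxy : G.Adj x y) (hyx : deg G y ≤ deg G x) {s : V}
    (hy : ∀ v, v ≠ s → v = y ∨ G.Adj y v) (hs : ∀ v, v ≠ s → v ≠ y → G.Adj s v) :
    W1 G (mu G (deg G x + 1 : ℝ)⁻¹ x) (mu G (deg G x + 1 : ℝ)⁻¹ y) ≤ (deg G x + 1 : ℝ)⁻¹ := by
  have hdx := deg_pos_of_adj hxy
  have hdy := deg_pos_of_adj hxy.symm
  have hp := Set.Ico_subset_Icc_self (inv_deg_add_one_mem_Ico hdx)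
  set p : ℝ := (deg G x + 1 : ℝ)⁻¹ with hp_def
  have hμ := mu_mem_stdSimplex hdx hp
  have hν := mu_mem_stdSimplex hdy hp
  have hμ_le (v : V) : mu G p x v ≤ p := by
    rw [hp_def, mu_inv_deg_add_one hdx]
    split_ifs
    exacts [le_rfl, hp.1]
  have hdom (v : V) (hv : v ≠ s) : mu G p x v ≤ mu G p y v :=
    (hμ_le v).trans (inv_deg_add_one_le_mu hdy hyx (hy v hv))
  have hterm (v : V) : G.dist s v * (mu G p y v - mu G p x v) ≤
      mu G p y v - mu G p x v + if v = s then mu G p x s else 0 := by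
    rcases eq_or_ne v s with rfl | hvs
    · simpa using hν.1 v
    rcases eq_or_ne v y with rfl | hvy
    · have hμy : mu G p x v = p := by rw [hp_def, mu_inv_deg_add_one hdx, if_pos (.inr hxy)]
      have hνy : mu G p v v = p := if_pos rfl
      simp [hμy, hνy, hvs]
    · simp [SimpleGraph.dist_eq_one_iff_adj.2 (hs v hvs hvy), hvs]
  calc W1 G (mu G p x) (mu G p y)
      ≤ ∑ v, G.dist s v * (mu G p y v - mu G p x v) := W1_le_sum_dist_mul_sub hμ hν hdom
    _ ≤ ∑ v, (mu G p y v - mu G p x v + if v = s then mu G p x s else 0) :=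
        sum_le_sum fun v _ => hterm v
    _ = mu G p x s := by simp [sum_add_distrib, sum_sub_distrib, hμ.2, hν.2]
    _ ≤ p := hμ_le s

lemma one_le_kappaLLY_of_deg_le (hG : G.Connected)
    (h : ∀ x y z, Gᶜ.Adj x y → Gᶜ.Adj x z → y = z) (hxy : G.Adj x y)
    (hyx : deg G y ≤ deg G x) : 1 ≤ kappaLLY G x y := by
  have hp := inv_deg_add_one_mem_Ico (deg_pos_of_adj hxy)
  obtain ⟨s, hy, hs⟩ := exists_forall_ne_adj h y
  refine le_trans ?_ (kappa_div_one_sub_le_kappaLLY hG hxy hp)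
  rw [one_le_div (sub_pos.2 hp.2), kappa]
  exact sub_le_sub_left (W1_mu_inv_deg_add_one_le hxy hyx hy hs) 1

lemma one_le_kappaLLY_of_unique_compl_adj (hG : G.Connected)
    (h : ∀ x y z, Gᶜ.Adj x y → Gᶜ.Adj x z → y = z) (hxy : G.Adj x y) : 1 ≤ kappaLLY G x y := by
  rcases le_total (deg G y) (deg G x) with hyx | hxy_le
  · exact one_le_kappaLLY_of_deg_le hG h hxy hyx
  · rw [kappaLLY_comm]
    exact one_le_kappaLLY_of_deg_le hG h hxy.symm hxy_le

end MatchingDeletion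

/-- A graph of diameter 2 is Bonnet-Myers sharp iff it can be obtained from the
complete graph on its vertices by deleting a matching. -/
theorem stmt0 {V : Type*} [Fintype V] (G : SimpleGraph V) (hconn : G.Connected)
    (hdiam : diam G = 2) :
    BMSharp G ↔ IsMatchingDeletionOfComplete G := by
  rw [bmSharp_iff_forall_adj_le_kappaLLY hconn (hdiam ▸ two_pos), hdiam, Nat.cast_ofNat,
    div_self two_ne_zero, isMatchingDeletionOfComplete_iff]
  constructor
  · intro hK x y z hy hz
    exact eq_of_dist_eq_two_of_one_le_kappaLLY hconn hK (dist_eq_two_of_compl_adj hconn hdiam hy)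
      (dist_eq_two_of_compl_adj hconn hdiam hz)
  · exact fun h x y hxy => one_le_kappaLLY_of_unique_compl_adj hconn h hxy
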